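/- arXiv:1905.09736 — 2 statements merged into one kernel-verified Lean document; each statement's English description precedes it below -/
import Mathlib

section
/- Let X, Y be real r×n matrices, let A, A'', Q₃ be real r×r matrices, and let ρ > 0. Then the matrix ρ·1 + X Xᵀ is positive definite (hence invertible), and A'⋆ = (Y Xᵀ + ρ (A − A'' + Q₃)) (ρ·1 + X Xᵀ)⁻¹ is the unique minimizer over real r×r matrices A' of the function A' ↦ (1/2)‖A' X − Y‖_F² + (ρ/2)‖A − A' − A'' + Q₃‖_F². -/
/-!
The objective `A' ↦ (1/2)‖A' X − Y‖² + (ρ/2)‖C − A'‖²`, with `C = A − A'' + Q₃`, is a quadratic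
polynomial. Its gradient at `S` is `S G − (Y Xᵀ + ρ C)`, where `G = ρ·1 + X Xᵀ`, and its
second-order term is `(1/2) tr (D G Dᵀ)`. Hence the objective at `S + D` exceeds its value at a zero
`S` of the gradient by exactly `(1/2) tr (D G Dᵀ)`, which is positive for `D ≠ 0` as soon as `G` is
positive definite.
-/

open Matrix

/-- The Frobenius norm of a real matrix: `‖M‖_F = sqrt (∑ i j, M i j ^ 2)`. -/
noncomputable def frobNorm {m n : Type*} [Fintype m] [Fintype n]
    (M : Matrix m n ℝ) : ℝ :=
  Real.sqrt (∑ i, ∑ j, (M i j) ^ 2)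

variable {m k n : Type*}

section FrobeniusNorm

variable [Fintype m] [Fintype n]

theorem frobNorm_sq (M : Matrix m n ℝ) : frobNorm M ^ 2 = (M * Mᵀ).trace := by
  rw [frobNorm, Real.sq_sqrt (by positivity)]
  simp only [trace, diag_apply, mul_apply, transpose_apply, sq]

theorem frobNorm_neg (M : Matrix m n ℝ) : frobNorm (-M) = frobNorm M := by
  simp only [frobNorm, Matrix.neg_apply, neg_sq]

theorem frobNorm_add_sq (M N : Matrix m n ℝ) :
    frobNorm (M + N) ^ 2 = frobNorm M ^ 2 + 2 * (M * Nᵀ).trace + frobNorm N ^ 2 := by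
  have trace_symm : (N * Mᵀ).trace = (M * Nᵀ).trace := by
    rw [← trace_transpose, transpose_mul, transpose_transpose]
  simp only [frobNorm_sq, transpose_add, Matrix.add_mul, Matrix.mul_add, trace_add, trace_symm]
  ring

end FrobeniusNorm

theorem trace_mul_mul_conjTranspose_pos {R : Type*} [Ring R] [PartialOrder R] [StarRing R]
    [IsOrderedCancelAddMonoid R] [Fintype m] [Fintype k] {G : Matrix k k R} (hG : G.PosDef)
    {D : Matrix m k R} (hD : D ≠ 0) : 0 < (D * G * Dᴴ).trace := by
  have trace_eq_sum_rows : (D * G * Dᴴ).trace = ∑ i, star (star (D i)) ⬝ᵥ G *ᵥ star (D i) := by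
    simp only [star_star, dotProduct_mulVec, ← mul_apply_eq_vecMul]
    rfl
  obtain ⟨i, hi⟩ : ∃ i, D i ≠ 0 := Function.ne_iff.mp hD
  rw [trace_eq_sum_rows]
  exact Finset.sum_pos' (fun j _ ↦ hG.posSemidef.dotProduct_mulVec_nonneg (star (D j)))
    ⟨i, Finset.mem_univ i, hG.dotProduct_mulVec_pos (star_ne_zero.mpr hi)⟩

section Ridge

variable [Fintype n] [DecidableEq k]

/-- The regularized Gram matrix, which represents the second-order part of `ridgeObjective`. -/
def ridgeGram (X : Matrix k n ℝ) (ρ : ℝ) : Matrix k k ℝ :=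
  ρ • (1 : Matrix k k ℝ) + X * Xᵀ

theorem ridgeGram_posDef [Finite k] (X : Matrix k n ℝ) {ρ : ℝ} (hρ : 0 < ρ) :
    (ridgeGram X ρ).PosDef := by
  have gram_posSemidef : (X * Xᵀ).PosSemidef := by
    simpa only [conjTranspose_eq_transpose_of_trivial] using posSemidef_self_mul_conjTranspose X
  exact (PosDef.one.smul hρ).add_posSemidef gram_posSemidef

variable [Fintype k]

/-- The closed-form ridge regression estimator. It uses the nonsingular inverse, so it is the
intended matrix only when `ridgeGram X ρ` is invertible. -/
noncomputable def ridgeSolution (X : Matrix k n ℝ) (Y : Matrix m n ℝ) (C : Matrix m k ℝ) (ρ : ℝ) :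
    Matrix m k ℝ :=
  (Y * Xᵀ + ρ • C) * (ridgeGram X ρ)⁻¹

theorem ridgeSolution_mul_ridgeGram {X : Matrix k n ℝ} {ρ : ℝ} (hG : IsUnit (ridgeGram X ρ))
    (Y : Matrix m n ℝ) (C : Matrix m k ℝ) :
    ridgeSolution X Y C ρ * ridgeGram X ρ = Y * Xᵀ + ρ • C :=
  nonsing_inv_mul_cancel_right _ _ ((isUnit_iff_isUnit_det _).mp hG)

variable [Fintype m]

/-- The objective of ridge (Tikhonov-regularized) regression of `Y` on `X`, as a function of the
coefficient matrix `B`, with the penalty centred at `C`. The CDMD subproblem is the case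
`C = A - A'' + Q₃`. -/
noncomputable def ridgeObjective (X : Matrix k n ℝ) (Y : Matrix m n ℝ) (C : Matrix m k ℝ) (ρ : ℝ)
    (B : Matrix m k ℝ) : ℝ :=
  (1 / 2) * frobNorm (B * X - Y) ^ 2 + (ρ / 2) * frobNorm (C - B) ^ 2

theorem ridgeObjective_add (X : Matrix k n ℝ) (Y : Matrix m n ℝ) (C : Matrix m k ℝ) (ρ : ℝ)
    (S D : Matrix m k ℝ) :
    ridgeObjective X Y C ρ (S + D) = ridgeObjective X Y C ρ S
      + ((S * ridgeGram X ρ - (Y * Xᵀ + ρ • C)) * Dᵀ).trace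
      + (1 / 2) * (D * ridgeGram X ρ * Dᵀ).trace := by
  have fit_residual : (S + D) * X - Y = (S * X - Y) + D * X := by rw [Matrix.add_mul]; abel
  have penalty_residual : C - (S + D) = (C - S) + -D := by abel
  have gradient : S * ridgeGram X ρ - (Y * Xᵀ + ρ • C) = (S * X - Y) * Xᵀ - ρ • (C - S) := by
    simp only [ridgeGram, Matrix.mul_add, Matrix.mul_smul, Matrix.mul_one, Matrix.sub_mul,
      Matrix.mul_assoc]
    module
  have hessian : (D * ridgeGram X ρ * Dᵀ).trace = frobNorm (D * X) ^ 2 + ρ * frobNorm D ^ 2 := by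
    simp only [ridgeGram, frobNorm_sq, Matrix.mul_add, Matrix.add_mul, Matrix.mul_smul,
      Matrix.smul_mul, Matrix.mul_one, Matrix.mul_assoc, transpose_mul, trace_add, trace_smul,
      smul_eq_mul]
    ring
  rw [ridgeObjective, ridgeObjective, fit_residual, penalty_residual, frobNorm_add_sq,
    frobNorm_add_sq, frobNorm_neg, gradient, hessian]
  simp only [transpose_mul, transpose_neg, Matrix.mul_neg, trace_neg, Matrix.sub_mul _ _ Dᵀ,
    Matrix.smul_mul, trace_sub, trace_smul, smul_eq_mul, Matrix.mul_assoc]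
  ring

theorem ridgeObjective_ridgeSolution_lt {X : Matrix k n ℝ} {ρ : ℝ} (hG : (ridgeGram X ρ).PosDef)
    (Y : Matrix m n ℝ) (C : Matrix m k ℝ) {B : Matrix m k ℝ} (hB : B ≠ ridgeSolution X Y C ρ) :
    ridgeObjective X Y C ρ (ridgeSolution X Y C ρ) < ridgeObjective X Y C ρ B := by
  have expansion := ridgeObjective_add X Y C ρ (ridgeSolution X Y C ρ) (B - ridgeSolution X Y C ρ)
  rw [add_sub_cancel, ridgeSolution_mul_ridgeGram hG.isUnit, sub_self, Matrix.zero_mul, trace_zero,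
    add_zero] at expansion
  have excess_pos := trace_mul_mul_conjTranspose_pos hG (sub_ne_zero.mpr hB)
  rw [conjTranspose_eq_transpose_of_trivial] at excess_pos
  linarith

theorem cdmd2_Aprime_unique_minimizer_general {X : Matrix k n ℝ} {ρ : ℝ}
    (hG : (ridgeGram X ρ).PosDef) (Y : Matrix m n ℝ) (C : Matrix m k ℝ) :
    (∀ B, ridgeObjective X Y C ρ (ridgeSolution X Y C ρ) ≤ ridgeObjective X Y C ρ B) ∧
      ∀ B, ridgeObjective X Y C ρ B = ridgeObjective X Y C ρ (ridgeSolution X Y C ρ) →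
        B = ridgeSolution X Y C ρ := by
  refine ⟨fun B ↦ ?_, fun B hB ↦ ?_⟩
  · rcases eq_or_ne B (ridgeSolution X Y C ρ) with rfl | hne
    · exact le_rfl
    · exact (ridgeObjective_ridgeSolution_lt hG Y C hne).le
  · by_contra hne
    exact (ridgeObjective_ridgeSolution_lt hG Y C hne).ne' hB

end Ridge

/-- For `ρ > 0`, the matrix `ρ·1 + X Xᵀ` is positive definite, and
`A'⋆ = (Y Xᵀ + ρ (A − A'' + Q₃)) (ρ·1 + X Xᵀ)⁻¹` is the unique minimizer of
`A' ↦ (1/2)‖A' X − Y‖_F² + (ρ/2)‖A − A' − A'' + Q₃‖_F²`. -/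
theorem cdmd2_Aprime_unique_minimizer (r n : ℕ) (X Y : Matrix (Fin r) (Fin n) ℝ)
    (A A'' Q₃ : Matrix (Fin r) (Fin r) ℝ) (ρ : ℝ) (hρ : 0 < ρ) :
    (ρ • (1 : Matrix (Fin r) (Fin r) ℝ) + X * Xᵀ).PosDef ∧
    (∀ A' : Matrix (Fin r) (Fin r) ℝ,
      (1 / 2) * frobNorm ((Y * Xᵀ + ρ • (A - A'' + Q₃))
            * (ρ • (1 : Matrix (Fin r) (Fin r) ℝ) + X * Xᵀ)⁻¹ * X - Y) ^ 2
        + (ρ / 2) * frobNorm (A - (Y * Xᵀ + ρ • (A - A'' + Q₃))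
            * (ρ • (1 : Matrix (Fin r) (Fin r) ℝ) + X * Xᵀ)⁻¹ - A'' + Q₃) ^ 2
      ≤ (1 / 2) * frobNorm (A' * X - Y) ^ 2
        + (ρ / 2) * frobNorm (A - A' - A'' + Q₃) ^ 2) ∧
    (∀ A' : Matrix (Fin r) (Fin r) ℝ,
      (1 / 2) * frobNorm (A' * X - Y) ^ 2
          + (ρ / 2) * frobNorm (A - A' - A'' + Q₃) ^ 2
        = (1 / 2) * frobNorm ((Y * Xᵀ + ρ • (A - A'' + Q₃))
              * (ρ • (1 : Matrix (Fin r) (Fin r) ℝ) + X * Xᵀ)⁻¹ * X - Y) ^ 2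
          + (ρ / 2) * frobNorm (A - (Y * Xᵀ + ρ • (A - A'' + Q₃))
              * (ρ • (1 : Matrix (Fin r) (Fin r) ℝ) + X * Xᵀ)⁻¹ - A'' + Q₃) ^ 2 →
      A' = (Y * Xᵀ + ρ • (A - A'' + Q₃))
              * (ρ • (1 : Matrix (Fin r) (Fin r) ℝ) + X * Xᵀ)⁻¹) := by
  have penalty_residual (A' : Matrix (Fin r) (Fin r) ℝ) :
      A - A' - A'' + Q₃ = A - A'' + Q₃ - A' := by abel
  simp only [penalty_residual]
  have hG := ridgeGram_posDef X hρ
  exact ⟨hG, cdmd2_Aprime_unique_minimizer_general hG Y (A - A'' + Q₃)⟩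
end

section
/- Let X, Y be real r×n matrices such that X Xᵀ and Y Yᵀ are positive definite, and let ν > 0 and μ > 0. Define, for tuples (A, A', B, B', C, A'', B'') of real r×r matrices, the objective h = (1/2)‖A' X − Y‖_F² + (1/2)‖X − B' Y‖_F² + (ν/2)‖C − 1‖_F² + (μ/2)‖A''‖_F² + (μ/2)‖B''‖_F², and the feasible set Ω = { (A, A', B, B', C, A'', B'') : C = A B, C = B A, A = A' + A'', B = B' + B'' }. Then h is coercive on Ω: for every real c, the set of tuples in Ω satisfying h ≤ c is bounded (in the norm ‖A‖_F + ‖A'‖_F + ‖B‖_F + ‖B'‖_F + ‖C‖_F + ‖A''‖_F + ‖B''‖_F). -/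
/-!
On a sublevel set of the objective each of the five squared residuals is bounded. Full row rank
gives `X` and `Y` right inverses, so a bound on `A' X - Y` is a bound on `A'`, and a bound on
`X - B' Y` is one on `B'`; the penalties control `A''`, `B''` and `C - 1`, and the triangle
inequality does the rest.
-/

open Matrix

lemma le_sqrt_div_of_mul_sq_le {a x c : ℝ} (ha : 0 < a) (h : a * x ^ 2 ≤ c) : x ≤ √(c / a) :=
  Real.le_sqrt_of_sq_le ((le_div_iff₀' ha).2 h)

lemma mul_mul_nonsing_inv_mul_eq_one {R m n : Type*} [CommRing R] [Fintype m] [DecidableEq m]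
    [Fintype n] {M : Matrix m n R} {N : Matrix n m R} (h : IsUnit (M * N)) :
    M * (N * (M * N)⁻¹) = 1 := by
  rw [← Matrix.mul_assoc, mul_nonsing_inv _ ((isUnit_iff_isUnit_det _).1 h)]

section Frobenius

open scoped ComplexOrder Matrix.Norms.Frobenius

lemma frobNorm_eq_norm {m n : Type*} [Fintype m] [Fintype n] (M : Matrix m n ℝ) :
    frobNorm M = ‖M‖ := by
  simp [frobNorm, frobenius_norm_def, Real.sqrt_eq_rpow]

variable {𝕜 l m n : Type*} [RCLike 𝕜] [Fintype m] [DecidableEq m] [Fintype n]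

lemma norm_le_of_norm_mul_sub_le [Fintype l] {X : Matrix m n 𝕜} {P : Matrix n m 𝕜}
    (hXP : X * P = 1) {M : Matrix l m 𝕜} {N : Matrix l n 𝕜} {s : ℝ} (h : ‖M * X - N‖ ≤ s) :
    ‖M‖ ≤ (s + ‖N‖) * ‖P‖ :=
  calc
    ‖M‖ = ‖M * X * P‖ := by rw [Matrix.mul_assoc, hXP, Matrix.mul_one]
    _ ≤ ‖M * X‖ * ‖P‖ := frobenius_norm_mul _ _
    _ ≤ (‖M * X - N‖ + ‖N‖) * ‖P‖ := by gcongr; exact norm_le_norm_sub_add _ _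
    _ ≤ (s + ‖N‖) * ‖P‖ := by gcongr

theorem cdmd2_objective_coercive_on_feasible_general {X Y : Matrix m n 𝕜}
    (hX : (X * Xᴴ).PosDef) (hY : (Y * Yᴴ).PosDef) {ν μ : ℝ} (hν : 0 < ν) (hμ : 0 < μ) (c : ℝ) :
    ∃ R : ℝ, ∀ A A' B B' C A'' B'' : Matrix m m 𝕜, A = A' + A'' → B = B' + B'' →
      (1 / 2) * ‖A' * X - Y‖ ^ 2 + (1 / 2) * ‖X - B' * Y‖ ^ 2 + (ν / 2) * ‖C - 1‖ ^ 2
          + (μ / 2) * ‖A''‖ ^ 2 + (μ / 2) * ‖B''‖ ^ 2 ≤ c →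
        ‖A‖ + ‖A'‖ + ‖B‖ + ‖B'‖ + ‖C‖ + ‖A''‖ + ‖B''‖ ≤ R := by
  obtain ⟨P, hXP⟩ : ∃ P : Matrix n m 𝕜, X * P = 1 :=
    ⟨_, mul_mul_nonsing_inv_mul_eq_one hX.isUnit⟩
  obtain ⟨Q, hYQ⟩ : ∃ Q : Matrix n m 𝕜, Y * Q = 1 :=
    ⟨_, mul_mul_nonsing_inv_mul_eq_one hY.isUnit⟩
  let s := √(c / (1 / 2))
  let t := √(c / (ν / 2))
  let u := √(c / (μ / 2))
  refine ⟨2 * ((s + ‖Y‖) * ‖P‖) + 2 * ((s + ‖X‖) * ‖Q‖) + (t + ‖(1 : Matrix m m 𝕜)‖) + 4 * u, ?_⟩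
  rintro _ A' _ B' C A'' B'' rfl rfl hc
  have hAfit : 0 ≤ (1 / 2) * ‖A' * X - Y‖ ^ 2 := by positivity
  have hBfit : 0 ≤ (1 / 2) * ‖X - B' * Y‖ ^ 2 := by positivity
  have hCpen : 0 ≤ (ν / 2) * ‖C - 1‖ ^ 2 := by positivity
  have hApen : 0 ≤ (μ / 2) * ‖A''‖ ^ 2 := by positivity
  have hBpen : 0 ≤ (μ / 2) * ‖B''‖ ^ 2 := by positivity
  have hA' : ‖A'‖ ≤ (s + ‖Y‖) * ‖P‖ :=
    norm_le_of_norm_mul_sub_le hXP (le_sqrt_div_of_mul_sq_le one_half_pos (by linarith))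
  have hB' : ‖B'‖ ≤ (s + ‖X‖) * ‖Q‖ := by
    rw [norm_sub_rev X] at hc hBfit
    exact norm_le_of_norm_mul_sub_le hYQ (le_sqrt_div_of_mul_sq_le one_half_pos (by linarith))
  have hC : ‖C - 1‖ ≤ t := le_sqrt_div_of_mul_sq_le (half_pos hν) (by linarith)
  have hA'' : ‖A''‖ ≤ u := le_sqrt_div_of_mul_sq_le (half_pos hμ) (by linarith)
  have hB'' : ‖B''‖ ≤ u := le_sqrt_div_of_mul_sq_le (half_pos hμ) (by linarith)
  linarith [norm_add_le A' A'', norm_add_le B' B'', norm_le_norm_sub_add C 1]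

end Frobenius

/-- When `X Xᵀ` and `Y Yᵀ` are positive definite and `ν, μ > 0`, the
objective of the modified CDMD problem is coercive on the feasible set
`Ω = {(A, A', B, B', C, A'', B'') : C = A B, C = B A, A = A' + A'', B = B' + B''}`:
every sublevel set of the objective restricted to `Ω` is bounded. -/
theorem cdmd2_objective_coercive_on_feasible (r n : ℕ)
    (X Y : Matrix (Fin r) (Fin n) ℝ)
    (hX : (X * Xᵀ).PosDef) (hY : (Y * Yᵀ).PosDef)
    (ν μ : ℝ) (hν : 0 < ν) (hμ : 0 < μ) :
    ∀ c : ℝ, ∃ R : ℝ,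
      ∀ A A' B B' C A'' B'' : Matrix (Fin r) (Fin r) ℝ,
        C = A * B → C = B * A → A = A' + A'' → B = B' + B'' →
        (1 / 2) * frobNorm (A' * X - Y) ^ 2
            + (1 / 2) * frobNorm (X - B' * Y) ^ 2
            + (ν / 2) * frobNorm (C - 1) ^ 2
            + (μ / 2) * frobNorm A'' ^ 2
            + (μ / 2) * frobNorm B'' ^ 2 ≤ c →
        frobNorm A + frobNorm A' + frobNorm B + frobNorm B'
            + frobNorm C + frobNorm A'' + frobNorm B'' ≤ R := by
  intro c
  obtain ⟨R, hR⟩ := cdmd2_objective_coercive_on_feasible_general hX hY hν hμ c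
  exact ⟨R, fun A A' B B' C A'' B'' _ _ => by
    simpa only [frobNorm_eq_norm] using hR A A' B B' C A'' B''⟩
end
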